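/- Let X be a real vector space, Z a nonempty set, φ : Z × X → Z with φ(z,0) = z for all z, f : Z → EReal, x₀ ∈ X, z₀ ∈ Z and T ∈ ℕ. Then A^T f(z₀) = sup_{μ ∈ M^T(x₀)} μ[f(Z_T)], where for a path (x₀, x₁, …, x_T) ∈ X^{T+1} the state Z_T is obtained from Z₀ = z₀ and Z_{t+1} = φ(Z_t, x_{t+1} − x_t), and μ[f(Z_T)] is the finite sum of f(Z_T(path)) weighted by μ. -/

import Mathlib

/-- An `EReal`-valued function on a real vector space is concave
(with the convention `⊤ + ⊥ = ⊥` of `EReal`). -/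
def IsEConcave {X : Type*} [AddCommGroup X] [Module ℝ X] (ψ : X → EReal) : Prop :=
  ∀ x y : X, ∀ a b : ℝ, 0 ≤ a → 0 ≤ b → a + b = 1 →
    (a : EReal) * ψ x + (b : EReal) * ψ y ≤ ψ (a • x + b • y)

/-- The concave envelope `g^♯` of `g : X → EReal`: the pointwise infimum of all
concave functions dominating `g`. -/
noncomputable def concaveEnvelope {X : Type*} [AddCommGroup X] [Module ℝ X]
    (g : X → EReal) (x : X) : EReal :=
  ⨅ ψ : {ψ : X → EReal // IsEConcave ψ ∧ ∀ y, g y ≤ ψ y}, ψ.1 x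

/-- A finitely supported probability measure on `X^{T+1}` under which the coordinate
process is a martingale in its natural filtration, starting at `x₀`; an element of
`M^T(x₀)` (the law of a simple martingale `M₀, …, M_T` with `M₀ = x₀`).
The martingale property is expressed by testing the increment `π(t+1) - π(t)`
against all functions `h` of the path depending only on the first `t+1` coordinates. -/
structure MartLaw (X : Type*) [AddCommGroup X] [Module ℝ X] (T : ℕ) (x₀ : X) where
  supp : Finset (Fin (T + 1) → X)
  w : (Fin (T + 1) → X) → ℝ
  nonneg : ∀ π, 0 ≤ w π
  zero_off : ∀ π ∉ supp, w π = 0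
  total : ∑ π ∈ supp, w π = 1
  init : ∀ π ∈ supp, w π ≠ 0 → π 0 = x₀
  mart : ∀ t : Fin T, ∀ h : (Fin (T + 1) → X) → ℝ,
    (∀ π π' : Fin (T + 1) → X, (∀ s : Fin (T + 1), s ≤ t.castSucc → π s = π' s) → h π = h π') →
    ∑ π ∈ supp, (w π * h π) • (π t.succ - π t.castSucc) = 0

/-- The integral `μ[f]` of an `EReal`-valued function on path space under a finitely
supported martingale law, as a finite sum in `EReal`. -/
noncomputable def MartLaw.exp {X : Type*} [AddCommGroup X] [Module ℝ X] {T : ℕ} {x₀ : X}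
    (μ : MartLaw X T x₀) (f : (Fin (T + 1) → X) → EReal) : EReal :=
  ∑ π ∈ μ.supp, (μ.w π : EReal) * f π

/-- The operator `A`: `Ag(z) = (g ∘ φ(z,·))^♯(0)`. -/
noncomputable def Aop {X Z : Type*} [AddCommGroup X] [Module ℝ X]
    (φ : Z → X → Z) (g : Z → EReal) : Z → EReal :=
  fun z => concaveEnvelope (fun d => g (φ z d)) 0

/-- The state process: `Z₀ = z₀`, `Z_{t+1} = φ(Z_t, x_{t+1} - x_t)` along a path `π : ℕ → X`. -/
def stateProc {X Z : Type*} [AddCommGroup X] (φ : Z → X → Z) (z₀ : Z) (π : ℕ → X) : ℕ → Z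
  | 0 => z₀
  | t + 1 => φ (stateProc φ z₀ π t) (π (t + 1) - π t)

/-- Extension of a path `x₀, …, x_T` to a path indexed by `ℕ` (constant after time `T`). -/
def pathExt {X : Type*} {T : ℕ} (π : Fin (T + 1) → X) : ℕ → X :=
  fun s => if h : s ≤ T then π ⟨s, Nat.lt_succ_of_le h⟩ else π (Fin.last T)

section Helpers

theorem ereal_mul_sum {ι : Type*} (s : Finset ι) (c : ℝ) (hc : 0 ≤ c) (F : ι → EReal) :
    (c : EReal) * ∑ i ∈ s, F i = ∑ i ∈ s, (c : EReal) * F i := by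
  classical
  induction s using Finset.induction_on with
  | empty => simp
  | insert i s hi ih =>
    rw [Finset.sum_insert hi, Finset.sum_insert hi,
      EReal.left_distrib_of_nonneg_of_ne_top (by exact_mod_cast hc) (EReal.coe_ne_top c), ih]

theorem ereal_sum_mul {ι : Type*} (s : Finset ι) (w : ι → ℝ) (hw : ∀ i ∈ s, 0 ≤ w i)
    (x : EReal) :
    ((∑ i ∈ s, w i : ℝ) : EReal) * x = ∑ i ∈ s, (w i : EReal) * x := by
  classical
  induction s using Finset.induction_on with
  | empty => simp
  | insert i s hi ih =>
    have h1 : 0 ≤ w i := hw i (by simp)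
    have h2 : ∀ j ∈ s, 0 ≤ w j := fun j hj => hw j (by simp [hj])
    have h3 : 0 ≤ ∑ j ∈ s, w j := Finset.sum_nonneg h2
    rw [Finset.sum_insert hi, Finset.sum_insert hi, EReal.coe_add,
      EReal.right_distrib_of_nonneg (by exact_mod_cast h1) (by exact_mod_cast h3), ih h2]

theorem econcave_jensen {X : Type*} [AddCommGroup X] [Module ℝ X] (ψ : X → EReal)
    (hψ : IsEConcave ψ) {ι : Type*} (s : Finset ι) (w : ι → ℝ) (hw : ∀ i ∈ s, 0 ≤ w i)
    (d : ι → X) (hW : 0 < ∑ i ∈ s, w i) :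
    ∑ i ∈ s, (w i : EReal) * ψ (d i) ≤
      ((∑ i ∈ s, w i : ℝ) : EReal) * ψ ((∑ i ∈ s, w i)⁻¹ • ∑ i ∈ s, w i • d i) := by
  classical
  induction s using Finset.induction_on with
  | empty => simp at hW
  | insert i s hi ih =>
    have h1 : 0 ≤ w i := hw i (by simp)
    have h2 : ∀ j ∈ s, 0 ≤ w j := fun j hj => hw j (by simp [hj])
    have h3 : 0 ≤ ∑ j ∈ s, w j := Finset.sum_nonneg h2
    rw [Finset.sum_insert hi] at hW
    rw [Finset.sum_insert hi, Finset.sum_insert hi, Finset.sum_insert hi]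
    rcases h3.eq_or_lt with h0 | h0
    · have h4 : ∀ j ∈ s, w j = 0 := (Finset.sum_eq_zero_iff_of_nonneg h2).1 h0.symm
      have e1 : ∑ j ∈ s, (w j : EReal) * ψ (d j) = 0 :=
        Finset.sum_eq_zero fun j hj => by simp [h4 j hj]
      have e2 : ∑ j ∈ s, w j • d j = 0 :=
        Finset.sum_eq_zero fun j hj => by simp [h4 j hj]
      rw [← h0] at hW
      rw [e1, e2, ← h0]
      have : w i ≠ 0 := by intro h; simp [h] at hW
      simp [smul_smul, this]
    · have IH := ih h2 h0
      set b := ∑ j ∈ s, w j with hb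
      set m := ∑ j ∈ s, w j • d j with hm
      have hc := hψ (d i) (b⁻¹ • m) (w i / (w i + b)) (b / (w i + b)) (by positivity)
        (by positivity) (by field_simp)
      have hpt : (w i / (w i + b)) • d i + (b / (w i + b)) • b⁻¹ • m
          = (w i + b)⁻¹ • (w i • d i + m) := by
        rw [smul_add, smul_smul, smul_smul]
        congr 2 <;> field_simp
      rw [hpt] at hc
      have hmul := mul_le_mul_of_nonneg_left hc
        (show (0 : EReal) ≤ ((w i + b : ℝ) : EReal) by exact_mod_cast hW.le)
      refine le_trans ?_ hmul
      rw [EReal.left_distrib_of_nonneg_of_ne_top (by exact_mod_cast hW.le) (EReal.coe_ne_top _),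
        ← mul_assoc, ← mul_assoc, ← EReal.coe_mul, ← EReal.coe_mul,
        mul_div_cancel₀ _ hW.ne', mul_div_cancel₀ _ hW.ne']
      gcongr

theorem ereal_mul_sSup_choice (a : ℝ) (ha : 0 ≤ a) (S : Set EReal) (hS : S.Nonempty) (c : EReal)
    (hc : c < (a : EReal) * sSup S) : ∃ s ∈ S, c < (a : EReal) * s := by
  rcases ha.eq_or_lt with h0 | h0
  · obtain ⟨s, hs⟩ := hS
    refine ⟨s, hs, ?_⟩
    simpa [← h0] using hc
  · have h1 : (0 : EReal) < (a : EReal) := by exact_mod_cast h0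
    rw [mul_comm, ← EReal.div_lt_iff h1 (EReal.coe_ne_top a)] at hc
    obtain ⟨s, hs, h⟩ := lt_sSup_iff.1 hc
    refine ⟨s, hs, ?_⟩
    rw [EReal.div_lt_iff h1 (EReal.coe_ne_top a)] at h
    rwa [mul_comm]

theorem ereal_sum_sSup_choice {ι : Type*} (s : Finset ι) (w : ι → ℝ) (hw : ∀ i, 0 ≤ w i)
    (S : ι → Set EReal) (hS : ∀ i, (S i).Nonempty) (c : EReal)
    (hc : c < ∑ i ∈ s, (w i : EReal) * sSup (S i)) :
    ∃ v : ι → EReal, (∀ i, v i ∈ S i) ∧ c < ∑ i ∈ s, (w i : EReal) * v i := by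
  classical
  induction s using Finset.induction_on generalizing c with
  | empty => exact ⟨fun i => (hS i).some, fun i => (hS i).some_mem, by simpa using hc⟩
  | insert i s hi ih =>
    by_contra hcon
    push Not at hcon
    rw [Finset.sum_insert hi] at hc
    refine absurd hc (not_lt.2 (EReal.add_le_of_forall_lt fun a' ha' b' hb' => ?_))
    obtain ⟨x, hx, hx'⟩ := ereal_mul_sSup_choice _ (hw i) _ (hS i) _ ha'
    obtain ⟨v, hv, hv'⟩ := ih _ hb'
    have h := hcon (Function.update v i x) (by
      intro j
      by_cases hj : j = i
      · subst hj; simpa using hx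
      · simpa [hj] using hv j)
    rw [Finset.sum_insert hi] at h
    refine le_trans (add_le_add hx'.le hv'.le) (le_trans (le_of_eq ?_) h)
    congr 1
    · simp
    · refine Finset.sum_congr rfl fun j hj => ?_
      have : j ≠ i := fun h => hi (h ▸ hj)
      simp [this]

/-- Values of finite averages of `g` over families with barycentre `x`. -/
def avgSet {X : Type*} [AddCommGroup X] [Module ℝ X] (g : X → EReal) (x : X) : Set EReal :=
  {v | ∃ (ι : Type) (_ : Fintype ι) (w : ι → ℝ) (d : ι → X), (∀ i, 0 ≤ w i) ∧ ∑ i, w i = 1 ∧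
    ∑ i, w i • d i = x ∧ v = ∑ i, (w i : EReal) * g (d i)}

theorem self_mem_avgSet {X : Type*} [AddCommGroup X] [Module ℝ X] (g : X → EReal) (x : X) :
    g x ∈ avgSet g x :=
  ⟨Unit, inferInstance, fun _ => 1, fun _ => x, by simp, by simp, by simp, by simp⟩

theorem concaveEnvelope_le_avg {X : Type*} [AddCommGroup X] [Module ℝ X] (g : X → EReal) (x : X) :
    concaveEnvelope g x ≤ sSup (avgSet g x) := by
  refine iInf_le_of_le ⟨fun x => sSup (avgSet g x), ?_, fun y => le_sSup (self_mem_avgSet g y)⟩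
    le_rfl
  intro x y a b ha hb hab
  refine EReal.add_le_of_forall_lt fun a' ha' b' hb' => ?_
  obtain ⟨u, hu, hu'⟩ := ereal_mul_sSup_choice _ ha _ ⟨_, self_mem_avgSet g x⟩ _ ha'
  obtain ⟨v, hv, hv'⟩ := ereal_mul_sSup_choice _ hb _ ⟨_, self_mem_avgSet g y⟩ _ hb'
  refine (add_le_add hu'.le hv'.le).trans (le_sSup ?_)
  obtain ⟨ι, _, w, d, h1, h2, h3, rfl⟩ := hu
  obtain ⟨κ, _, w', d', h1', h2', h3', rfl⟩ := hv
  refine ⟨ι ⊕ κ, inferInstance, Sum.elim (fun i => a * w i) (fun i => b * w' i),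
    Sum.elim d d', ?_, ?_, ?_, ?_⟩
  · rintro (i | i)
    · exact mul_nonneg ha (h1 i)
    · exact mul_nonneg hb (h1' i)
  · simp [← Finset.mul_sum, h2, h2', hab]
  · simp [← h3, ← h3', Finset.smul_sum, smul_smul]
  · simp [ereal_mul_sum _ _ ha, ereal_mul_sum _ _ hb, mul_assoc]

theorem stateProc_congr {X Z : Type*} [AddCommGroup X] (φ : Z → X → Z) (z₀ : Z) (π π' : ℕ → X)
    (t : ℕ) (h : ∀ s ≤ t, π s = π' s) : stateProc φ z₀ π t = stateProc φ z₀ π' t := by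
  induction t with
  | zero => rfl
  | succ t ih =>
    simp only [stateProc]
    rw [ih fun s hs => h s (by omega), h (t + 1) le_rfl, h t (by omega)]

theorem exists_family {X Z : Type*} [AddCommGroup X] [Module ℝ X]
    (φ : Z → X → Z) (x₀ : X) (z₀ : Z) (T : ℕ) : ∀ (f : Z → EReal) (c : EReal),
    c < (Aop φ)^[T] f z₀ →
    ∃ (ι : Type) (_ : Fintype ι) (w : ι → ℝ) (p : ι → ℕ → X), (∀ i, 0 ≤ w i) ∧ ∑ i, w i = 1 ∧
      (∀ i, p i 0 = x₀) ∧
      (∀ t < T, ∀ h : (ℕ → X) → ℝ, (∀ π π' : ℕ → X, (∀ s ≤ t, π s = π' s) → h π = h π') →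
        ∑ i, (w i * h (p i)) • (p i (t + 1) - p i t) = 0) ∧
      c < ∑ i, (w i : EReal) * f (stateProc φ z₀ (p i) T) := by
  induction T with
  | zero =>
    intro f c hc
    exact ⟨Unit, inferInstance, fun _ => 1, fun _ _ => x₀, by simp, by simp, by simp, by simp,
      by simpa [stateProc] using hc⟩
  | succ T ih =>
    intro f c hc
    rw [Function.iterate_succ_apply] at hc
    obtain ⟨ι, _, w, p, h1, h2, h3, h4, h5⟩ := ih _ _ hc
    have h6 : c < ∑ i, (w i : EReal) *
        sSup (avgSet (fun d => f (φ (stateProc φ z₀ (p i) T) d)) 0) := by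
      refine h5.trans_le (Finset.sum_le_sum fun i _ => ?_)
      exact mul_le_mul_of_nonneg_left (concaveEnvelope_le_avg _ _) (by exact_mod_cast h1 i)
    obtain ⟨v, hv, hv'⟩ := ereal_sum_sSup_choice _ w h1 _ (fun i => ⟨_, self_mem_avgSet _ _⟩) _ h6
    choose κ hκ q d k1 k2 k3 k4 using hv
    let P : (Σ i, κ i) → ℕ → X := fun j s => if s ≤ T then p j.1 s else p j.1 T + d j.1 j.2
    have hP : ∀ j, ∀ s ≤ T, P j s = p j.1 s := fun j s hs => by simp [P, hs]
    have hP' : ∀ j, P j (T + 1) = p j.1 T + d j.1 j.2 := fun j => by simp [P]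
    refine ⟨Σ i, κ i, inferInstance, fun j => w j.1 * q j.1 j.2, P, ?_, ?_, ?_, ?_, ?_⟩
    · exact fun j => mul_nonneg (h1 _) (k1 _ _)
    · simp [Fintype.sum_sigma, ← Finset.mul_sum, k2, h2]
    · intro j
      rw [hP _ _ (Nat.zero_le _), h3]
    · intro t ht h hh
      rw [Fintype.sum_sigma]
      have hhP : ∀ j, h (P j) = h (p j.1) := fun j =>
        hh _ _ fun s hs => hP j s (by omega)
      rcases Nat.lt_succ_iff_lt_or_eq.1 ht with ht' | rfl
      · rw [← h4 t ht' h hh]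
        refine Finset.sum_congr rfl fun i _ => ?_
        simp only [hhP]
        have : ∀ k, (w i * q i k * h (p i)) • (P ⟨i, k⟩ (t + 1) - P ⟨i, k⟩ t)
            = q i k • ((w i * h (p i)) • (p i (t + 1) - p i t)) := by
          intro k
          rw [hP _ _ (by omega), hP _ _ (by omega), smul_smul]
          congr 1
          ring
        simp only [this]
        rw [← Finset.sum_smul, k2, one_smul]
      · refine Finset.sum_eq_zero fun i _ => ?_
        simp only [hhP]
        have : ∀ k, (w i * q i k * h (p i)) • (P ⟨i, k⟩ (t + 1) - P ⟨i, k⟩ t)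
            = (w i * h (p i)) • (q i k • d i k) := by
          intro k
          rw [hP', hP _ _ le_rfl, smul_smul, add_sub_cancel_left]
          congr 1
          ring
        simp only [this]
        rw [← Finset.smul_sum, k3, smul_zero]
    · refine hv'.trans_le (le_of_eq ?_)
      rw [Fintype.sum_sigma]
      refine Finset.sum_congr rfl fun i _ => ?_
      rw [k4, ereal_mul_sum _ _ (h1 i)]
      refine Finset.sum_congr rfl fun k _ => ?_
      simp only [stateProc]
      rw [hP', hP _ _ le_rfl, add_sub_cancel_left,
        stateProc_congr φ z₀ (P ⟨i, k⟩) (p i) T (hP _), EReal.coe_mul, mul_assoc]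

theorem pathExt_of_le {X : Type*} {T : ℕ} (π : Fin (T + 1) → X) (s : ℕ) (h : s ≤ T) :
    pathExt π s = π ⟨s, Nat.lt_succ_of_le h⟩ := by
  simp [pathExt, h]

theorem exists_martLaw {X : Type*} [AddCommGroup X] [Module ℝ X] (T : ℕ) (x₀ : X)
    (ι : Type) [Fintype ι] (w : ι → ℝ) (p : ι → ℕ → X) (h1 : ∀ i, 0 ≤ w i) (h2 : ∑ i, w i = 1)
    (h3 : ∀ i, p i 0 = x₀)
    (h4 : ∀ t < T, ∀ h : (ℕ → X) → ℝ, (∀ π π' : ℕ → X, (∀ s ≤ t, π s = π' s) → h π = h π') →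
        ∑ i, (w i * h (p i)) • (p i (t + 1) - p i t) = 0) :
    ∃ μ : MartLaw X T x₀, ∀ F : (Fin (T + 1) → X) → EReal,
      μ.exp F = ∑ i, (w i : EReal) * F (fun s => p i s) := by
  classical
  let P : ι → Fin (T + 1) → X := fun i s => p i s
  have hm : ∀ i ∈ (Finset.univ : Finset ι), P i ∈ Finset.univ.image P := fun i _ =>
    Finset.mem_image_of_mem _ (Finset.mem_univ i)
  refine ⟨⟨Finset.univ.image P, fun π => ∑ i with P i = π, w i, ?_, ?_, ?_, ?_, ?_⟩, ?_⟩
  · exact fun π => Finset.sum_nonneg fun i _ => h1 i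
  · intro π hπ
    refine Finset.sum_eq_zero fun i hi => ?_
    exact absurd ((Finset.mem_filter.1 hi).2 ▸ hm i (Finset.mem_univ i)) hπ
  · rw [Finset.sum_fiberwise_of_maps_to hm, h2]
  · intro π hπ _
    obtain ⟨i, _, rfl⟩ := Finset.mem_image.1 hπ
    exact h3 i
  · intro t h hh
    have key := h4 t t.2 (fun π => h fun s => π s) (fun π π' hs => hh _ _ fun s hst => hs s hst)
    rw [← Finset.sum_fiberwise_of_maps_to hm] at key
    refine Eq.trans (Finset.sum_congr rfl fun π _ => ?_) key
    rw [Finset.sum_mul, Finset.sum_smul]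
    refine Finset.sum_congr rfl fun i hi => ?_
    rw [← (Finset.mem_filter.1 hi).2]
    simp [P]
  · intro F
    simp only [MartLaw.exp]
    rw [← Finset.sum_fiberwise_of_maps_to hm]
    refine Finset.sum_congr rfl fun π _ => ?_
    rw [ereal_sum_mul _ _ fun i _ => h1 i]
    refine Finset.sum_congr rfl fun i hi => ?_
    rw [← (Finset.mem_filter.1 hi).2]

theorem martLaw_step {X Z : Type*} [AddCommGroup X] [Module ℝ X]
    (φ : Z → X → Z) (g : Z → EReal) (x₀ : X) (z₀ : Z) (T : ℕ) (μ : MartLaw X T x₀)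
    (t : ℕ) (ht : t < T) :
    μ.exp (fun π => g (stateProc φ z₀ (pathExt π) (t + 1))) ≤
      μ.exp (fun π => Aop φ g (stateProc φ z₀ (pathExt π) t)) := by
  classical
  let t' : Fin T := ⟨t, ht⟩
  let r : (Fin (T + 1) → X) → ({s : Fin (T + 1) // s ≤ t'.castSucc} → X) := fun π s => π s
  have hm : ∀ π ∈ μ.supp, r π ∈ μ.supp.image r := fun π h => Finset.mem_image_of_mem _ h
  simp only [MartLaw.exp]
  rw [← Finset.sum_fiberwise_of_maps_to hm, ← Finset.sum_fiberwise_of_maps_to hm]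
  refine Finset.sum_le_sum fun k hk => ?_
  obtain ⟨π₀, hπ₀, rfl⟩ := Finset.mem_image.1 hk
  set z := stateProc φ z₀ (pathExt π₀) t with hz
  have hzeq : ∀ π, r π = r π₀ → stateProc φ z₀ (pathExt π) t = z := by
    intro π hπ
    refine stateProc_congr _ _ _ _ _ fun s hs => ?_
    rw [pathExt_of_le _ _ (by omega), pathExt_of_le _ _ (by omega)]
    exact congrFun hπ ⟨⟨s, by omega⟩, hs⟩
  set S := μ.supp.filter (fun π => r π = r π₀) with hSdef
  let d : (Fin (T + 1) → X) → X := fun π => π t'.succ - π t'.castSucc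
  have hL : ∑ π ∈ S, (μ.w π : EReal) * g (stateProc φ z₀ (pathExt π) (t + 1))
      = ∑ π ∈ S, (μ.w π : EReal) * g (φ z (d π)) := by
    refine Finset.sum_congr rfl fun π hπ => ?_
    simp only [stateProc]
    rw [hzeq π (Finset.mem_filter.1 hπ).2, pathExt_of_le _ _ (by omega),
      pathExt_of_le _ _ (by omega)]
    rfl
  have hR : ∑ π ∈ S, (μ.w π : EReal) * Aop φ g (stateProc φ z₀ (pathExt π) t)
      = ((∑ π ∈ S, μ.w π : ℝ) : EReal) * Aop φ g z := by
    rw [ereal_sum_mul _ _ fun i _ => μ.nonneg i]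
    refine Finset.sum_congr rfl fun π hπ => ?_
    rw [hzeq π (Finset.mem_filter.1 hπ).2]
  rw [hL, hR]
  have hd : ∑ π ∈ S, μ.w π • d π = 0 := by
    have := μ.mart t' (fun π => if r π = r π₀ then 1 else 0) (by
      intro π π' h
      have : r π = r π' := funext fun s => h s.1 s.2
      simp [this])
    rw [hSdef, Finset.sum_filter]
    refine Eq.trans ?_ this
    refine Finset.sum_congr rfl fun π _ => ?_
    split_ifs <;> simp [d]
  have hW : 0 ≤ ∑ π ∈ S, μ.w π := Finset.sum_nonneg fun i _ => μ.nonneg i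
  rcases hW.eq_or_lt with h0 | h0
  · have h4 := (Finset.sum_eq_zero_iff_of_nonneg fun i _ => μ.nonneg i).1 h0.symm
    rw [← h0, Finset.sum_eq_zero fun j hj => by rw [h4 j hj]; simp]
    simp
  · have h1 : (0 : EReal) < ((∑ π ∈ S, μ.w π : ℝ) : EReal) := by exact_mod_cast h0
    rw [← EReal.div_le_iff_le_mul h1 (EReal.coe_ne_top _)]
    refine le_iInf fun ψ => ?_
    rw [EReal.div_le_iff_le_mul h1 (EReal.coe_ne_top _)]
    have hj := econcave_jensen ψ.1 ψ.2.1 S μ.w (fun i _ => μ.nonneg i) d h0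
    rw [hd, smul_zero] at hj
    refine le_trans (Finset.sum_le_sum fun π _ => ?_) hj
    exact mul_le_mul_of_nonneg_left (ψ.2.2 _) (by exact_mod_cast μ.nonneg π)

theorem martLaw_le {X Z : Type*} [AddCommGroup X] [Module ℝ X]
    (φ : Z → X → Z) (x₀ : X) (z₀ : Z) (T : ℕ) (μ : MartLaw X T x₀)
    (t : ℕ) : t ≤ T → ∀ g : Z → EReal,
    μ.exp (fun π => g (stateProc φ z₀ (pathExt π) t)) ≤ (Aop φ)^[t] g z₀ := by
  induction t with
  | zero =>
    intro _ g
    simp only [MartLaw.exp, stateProc, Function.iterate_zero, id]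
    rw [← ereal_sum_mul _ _ fun i _ => μ.nonneg i, μ.total]
    simp
  | succ t ih =>
    intro ht g
    rw [Function.iterate_succ_apply]
    exact (martLaw_step φ g x₀ z₀ T μ t ht).trans (ih (by omega) _)

end Helpers

/-- `A^T f(z₀) = sup_{μ ∈ M^T(x₀)} μ[f(Z_T)]`, where `Z` is the state
process with `Z₀ = z₀`, `Z_{t+1} = φ(Z_t, x_{t+1} - x_t)` along the path. -/
theorem Aop_iterate_eq_sup_martLaw {X Z : Type*} [AddCommGroup X] [Module ℝ X] [Nonempty Z]
    (φ : Z → X → Z) (hφ : ∀ z, φ z 0 = z) (f : Z → EReal)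
    (x₀ : X) (z₀ : Z) (T : ℕ) :
    (Aop φ)^[T] f z₀ =
      ⨆ μ : MartLaw X T x₀, μ.exp fun π => f (stateProc φ z₀ (pathExt π) T) := by
  refine le_antisymm ?_ (iSup_le fun μ => martLaw_le φ x₀ z₀ T μ T le_rfl f)
  refine le_of_forall_lt fun c hc => ?_
  obtain ⟨ι, _, w, p, h1, h2, h3, h4, h5⟩ := exists_family φ x₀ z₀ T f c hc
  obtain ⟨μ, hμ⟩ := exists_martLaw T x₀ ι w p h1 h2 h3 h4
  refine h5.trans_le (le_trans (le_of_eq ?_) (le_iSup _ μ))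
  rw [hμ]
  refine Finset.sum_congr rfl fun i _ => ?_
  rw [stateProc_congr φ z₀ (pathExt fun s : Fin (T + 1) => p i s) (p i) T
    fun s hs => pathExt_of_le _ s hs]
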